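/- Let x, y be probability vectors of dimension d with strictly positive entries. There exist an integer m ≥ 1 and a probability vector c (of some finite dimension) such that x^{⊗m}⊗c ≺ y^{⊗m}⊗c, if and only if there exists a probability vector c′ (of some finite dimension) such that x⊗c′ ≺ y⊗c′. In other words, multiple-copy catalytic transformation is equivalent to single-copy catalytic transformation. -/

import Mathlib

/-!
Up to permutation of entries, vectors form a commutative semiring in which direct sums are sums
and tensor products are products. With `Sₙ = ∑_{i < n} xⁱ yⁿ⁻¹⁻ⁱ` one has there
`x Sₙ₊₁ = xⁿ⁺¹ + x y Sₙ` and `y Sₙ₊₁ = yⁿ⁺¹ + x y Sₙ`. Majorization survives adjoining the common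
direct summand `x y Sₙ c`, so if `c` catalyzes `n + 1` copies, then `Sₙ₊₁ c`, once normalized,
catalyzes a single copy.
-/

/-- The sum of the `k` largest entries of a vector (equivalently, for vectors with
nonnegative entries, the maximum of `∑ i ∈ s, x i` over subsets `s` of cardinality at
most `k`; this also accounts for padding with zeros). -/
noncomputable def topSum {ι : Type*} [Fintype ι] [DecidableEq ι] (x : ι → ℝ) (k : ℕ) : ℝ :=
  ((Finset.univ : Finset ι).powerset.filter (fun s => s.card ≤ k)).sup'
    ⟨∅, by simp⟩ (fun s => ∑ i ∈ s, x i)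

/-- A probability vector: nonnegative entries summing to 1. -/
def IsProbVec {ι : Type*} [Fintype ι] (x : ι → ℝ) : Prop :=
  (∀ i, 0 ≤ x i) ∧ ∑ i, x i = 1

/-- `x ≺ y` (majorization, after padding with zeros to a common dimension): every partial
sum of the `k` largest entries of `x` is at most that of `y`, with equal total sums. -/
def PMaj {ι κ : Type*} [Fintype ι] [DecidableEq ι] [Fintype κ] [DecidableEq κ]
    (x : ι → ℝ) (y : κ → ℝ) : Prop :=
  (∀ k : ℕ, topSum x k ≤ topSum y k) ∧ (∑ i, x i = ∑ j, y j)

/-- Tensor product of two vectors: `(x ⊗ y)_{(i,j)} = x_i y_j`. -/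
def pvTensor {ι κ : Type*} (x : ι → ℝ) (y : κ → ℝ) : ι × κ → ℝ :=
  fun p => x p.1 * y p.2

/-- The `m`-fold tensor power of a vector, indexed by tuples `Fin m → Fin d`. -/
def pvPow {d : ℕ} (x : Fin d → ℝ) (m : ℕ) : (Fin m → Fin d) → ℝ :=
  fun f => ∏ j, x (f j)

section Majorization

variable {ι κ μ : Type*} [Fintype ι] [DecidableEq ι] [Fintype κ] [DecidableEq κ]
  [Fintype μ] [DecidableEq μ]

theorem topSum_le_iff {x : ι → ℝ} {k : ℕ} {a : ℝ} :
    topSum x k ≤ a ↔ ∀ s : Finset ι, s.card ≤ k → ∑ i ∈ s, x i ≤ a := by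
  simp [topSum, Finset.sup'_le_iff]

theorem sum_le_topSum (x : ι → ℝ) {k : ℕ} {s : Finset ι} (hs : s.card ≤ k) :
    ∑ i ∈ s, x i ≤ topSum x k :=
  topSum_le_iff.1 le_rfl s hs

theorem exists_topSum_eq_sum (x : ι → ℝ) (k : ℕ) :
    ∃ s : Finset ι, s.card ≤ k ∧ topSum x k = ∑ i ∈ s, x i := by
  obtain ⟨s, hs, h⟩ := Finset.exists_mem_eq_sup'
    (s := (Finset.univ : Finset ι).powerset.filter (fun s => s.card ≤ k))
    ⟨∅, by simp⟩ (fun s => ∑ i ∈ s, x i)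
  exact ⟨s, (Finset.mem_filter.1 hs).2, h⟩

theorem topSum_comp_equiv_le (e : ι ≃ κ) (y : κ → ℝ) (k : ℕ) : topSum (y ∘ e) k ≤ topSum y k :=
  topSum_le_iff.2 fun s hs => by
    simpa using sum_le_topSum y (s := s.map e.toEmbedding) (by simpa using hs)

theorem topSum_comp_equiv (e : ι ≃ κ) (y : κ → ℝ) (k : ℕ) : topSum (y ∘ e) k = topSum y k := by
  refine (topSum_comp_equiv_le e y k).antisymm ?_
  simpa [Function.comp_assoc] using topSum_comp_equiv_le e.symm (y ∘ e) k

theorem topSum_smul {a : ℝ} (ha : 0 ≤ a) (x : ι → ℝ) (k : ℕ) :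
    topSum (a • x) k = a * topSum x k := by
  simp only [topSum, Pi.smul_apply, smul_eq_mul, ← Finset.mul_sum]
  exact (Finset.mul₀_sup' ha _ _ _).symm

theorem topSum_sumElim_le (x : ι → ℝ) {y : κ → ℝ} (h : ∀ k, topSum x k ≤ topSum y k)
    (z : μ → ℝ) (k : ℕ) : topSum (Sum.elim x z) k ≤ topSum (Sum.elim y z) k := by
  refine topSum_le_iff.2 fun s hs => ?_
  obtain ⟨t, ht, hty⟩ := exists_topSum_eq_sum y s.toLeft.card
  have hcard : (t.disjSum s.toRight).card ≤ k := by
    have := s.card_toLeft_add_card_toRight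
    rw [Finset.card_disjSum]
    omega
  calc ∑ i ∈ s, Sum.elim x z i
      = ∑ i ∈ s.toLeft, x i + ∑ i ∈ s.toRight, z i := by
        conv_lhs => rw [← Finset.toLeft_disjSum_toRight (u := s)]
        simp [Finset.sum_disjSum]
    _ ≤ ∑ j ∈ t, y j + ∑ i ∈ s.toRight, z i := by
        gcongr
        exact (sum_le_topSum x le_rfl).trans ((h _).trans hty.le)
    _ = ∑ i ∈ t.disjSum s.toRight, Sum.elim y z i := by simp [Finset.sum_disjSum]
    _ ≤ topSum (Sum.elim y z) k := sum_le_topSum _ hcard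

theorem PMaj.smul {x : ι → ℝ} {y : κ → ℝ} (h : PMaj x y) {a : ℝ} (ha : 0 ≤ a) :
    PMaj (a • x) (a • y) := by
  refine ⟨fun k => ?_, by simp [← Finset.mul_sum, h.2]⟩
  rw [topSum_smul ha, topSum_smul ha]
  exact mul_le_mul_of_nonneg_left (h.1 k) ha

theorem PMaj.sumElim {x : ι → ℝ} {y : κ → ℝ} (h : PMaj x y) (z : μ → ℝ) :
    PMaj (Sum.elim x z) (Sum.elim y z) :=
  ⟨topSum_sumElim_le x h.1 z, by simp [h.2]⟩

theorem PMaj.comp_equiv {ι' κ' : Type*} [Fintype ι'] [DecidableEq ι'] [Fintype κ']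
    [DecidableEq κ'] {x : ι → ℝ} {y : κ → ℝ} (h : PMaj x y) (e : ι' ≃ ι) (e' : κ' ≃ κ) :
    PMaj (x ∘ e) (y ∘ e') := by
  refine ⟨fun k => ?_, by simpa [Equiv.sum_comp e, Equiv.sum_comp e'] using h.2⟩
  rw [topSum_comp_equiv, topSum_comp_equiv]
  exact h.1 k

end Majorization

section PermClass

variable {ι κ : Type*} [Fintype ι] [Fintype κ]

/-- The class of a vector up to permutation of its entries: the formal sum of the entries in the
monoid ring `ℤ[ℝ]` of the multiplicative monoid of `ℝ`. Direct sums and tensor products of vectors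
become sums and products in this commutative ring. -/
noncomputable def permClass (x : ι → ℝ) : MonoidAlgebra ℤ ℝ :=
  ∑ i, MonoidAlgebra.of ℤ ℝ (x i)

theorem coeff_permClass (x : ι → ℝ) (a : ℝ) :
    (permClass x).coeff a = Fintype.card {i // x i = a} := by
  simp [permClass, MonoidAlgebra.coeff_sum, Finsupp.single_apply, Fintype.card_subtype]

theorem exists_equiv_of_permClass_eq {x : ι → ℝ} {y : κ → ℝ} (h : permClass x = permClass y) :
    ∃ e : ι ≃ κ, y ∘ e = x := by
  have hcard (a : ℝ) : Fintype.card {i // x i = a} = Fintype.card {j // y j = a} := by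
    rw [← Nat.cast_inj (R := ℤ), ← coeff_permClass, ← coeff_permClass, h]
  exact ⟨Equiv.ofFiberEquiv fun a => Fintype.equivOfCardEq (hcard a),
    funext (Equiv.ofFiberEquiv_map _)⟩

theorem PMaj.of_permClass_eq {ι' κ' : Type*} [Fintype ι'] [Fintype κ'] [DecidableEq ι]
    [DecidableEq κ] [DecidableEq ι'] [DecidableEq κ'] {x : ι → ℝ} {y : κ → ℝ} {x' : ι' → ℝ}
    {y' : κ' → ℝ} (h : PMaj x y) (hx : permClass x' = permClass x)
    (hy : permClass y' = permClass y) : PMaj x' y' := by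
  obtain ⟨e, rfl⟩ := exists_equiv_of_permClass_eq hx
  obtain ⟨e', rfl⟩ := exists_equiv_of_permClass_eq hy
  exact h.comp_equiv e e'

theorem permClass_sumElim (x : ι → ℝ) (y : κ → ℝ) :
    permClass (Sum.elim x y) = permClass x + permClass y := by
  simp [permClass]

theorem permClass_sigma {κ : ι → Type*} [∀ i, Fintype (κ i)] (z : ∀ i, κ i → ℝ) :
    permClass (fun p : Σ i, κ i => z p.1 p.2) = ∑ i, permClass (z i) :=
  Fintype.sum_sigma _

theorem permClass_pvTensor (x : ι → ℝ) (y : κ → ℝ) :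
    permClass (pvTensor x y) = permClass x * permClass y := by
  simp only [permClass, pvTensor, map_mul, Fintype.sum_mul_sum, Fintype.sum_prod_type]

theorem permClass_pvPow {d : ℕ} (x : Fin d → ℝ) (n : ℕ) :
    permClass (pvPow x n) = permClass x ^ n := by
  simp only [permClass, pvPow, map_prod, Fintype.sum_pow]

end PermClass

section TotalMass

theorem sum_pvTensor {ι κ : Type*} [Fintype ι] [Fintype κ] (x : ι → ℝ) (y : κ → ℝ) :
    ∑ p, pvTensor x y p = (∑ i, x i) * ∑ j, y j := by
  simp only [pvTensor, Fintype.sum_prod_type, Fintype.sum_mul_sum]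

theorem sum_pvPow {d : ℕ} (x : Fin d → ℝ) (n : ℕ) : ∑ f, pvPow x n f = (∑ i, x i) ^ n :=
  (Fintype.sum_pow x n).symm

theorem pvTensor_nonneg {ι κ : Type*} {x : ι → ℝ} {y : κ → ℝ} (hx : 0 ≤ x) (hy : 0 ≤ y) :
    0 ≤ pvTensor x y :=
  fun p => mul_nonneg (hx p.1) (hy p.2)

theorem pvPow_nonneg {d : ℕ} {x : Fin d → ℝ} (hx : 0 ≤ x) (n : ℕ) : 0 ≤ pvPow x n :=
  fun f => Finset.prod_nonneg fun j _ => hx (f j)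

end TotalMass

section GeomSum

variable {d e : ℕ}

/-- The index type of `pvGeomSum`: a summand `i < n` together with an index of
`x^{⊗i} ⊗ y^{⊗(n-1-i)}`. -/
abbrev GeomIndex (d e n : ℕ) : Type :=
  Σ i : Fin n, (Fin i → Fin d) × (Fin (n - 1 - i) → Fin e)

-- Provided as a shortcut: inside larger products, instance search exceeds its size limit.
instance (n : ℕ) : DecidableEq (GeomIndex d e n) := inferInstance

/-- The direct sum `⨁ i < n, x^{⊗i} ⊗ y^{⊗(n-1-i)}`. Tensored with a catalyst for `n` copies, it
yields, up to normalization, a catalyst for a single copy. -/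
def pvGeomSum (x : Fin d → ℝ) (y : Fin e → ℝ) (n : ℕ) : GeomIndex d e n → ℝ :=
  fun p => pvTensor (pvPow x p.1) (pvPow y (n - 1 - p.1)) p.2

theorem permClass_pvGeomSum (x : Fin d → ℝ) (y : Fin e → ℝ) (n : ℕ) :
    permClass (pvGeomSum x y n) =
      ∑ i ∈ Finset.range n, permClass x ^ i * permClass y ^ (n - 1 - i) := by
  refine (permClass_sigma fun i : Fin n => pvTensor (pvPow x i) (pvPow y (n - 1 - i))).trans ?_
  simp only [permClass_pvTensor, permClass_pvPow]
  exact Fin.sum_univ_eq_sum_range (fun i => permClass x ^ i * permClass y ^ (n - 1 - i)) n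

theorem sum_pvGeomSum (x : Fin d → ℝ) (y : Fin e → ℝ) (n : ℕ) :
    ∑ p, pvGeomSum x y n p =
      ∑ i ∈ Finset.range n, (∑ j, x j) ^ i * (∑ j, y j) ^ (n - 1 - i) := by
  simp only [pvGeomSum, Fintype.sum_sigma, sum_pvTensor, sum_pvPow]
  exact Fin.sum_univ_eq_sum_range (fun i => (∑ j, x j) ^ i * (∑ j, y j) ^ (n - 1 - i)) n

theorem pvGeomSum_nonneg {x : Fin d → ℝ} {y : Fin e → ℝ} (hx : 0 ≤ x) (hy : 0 ≤ y) (n : ℕ) :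
    0 ≤ pvGeomSum x y n :=
  fun p => pvTensor_nonneg (pvPow_nonneg hx _) (pvPow_nonneg hy _) p.2

theorem geom_sum₂_succ_eq' {R : Type*} [CommRing R] (x y : R) (n : ℕ) :
    ∑ i ∈ Finset.range (n + 1), x ^ i * y ^ (n - i) =
      y ^ n + x * ∑ i ∈ Finset.range n, x ^ i * y ^ (n - 1 - i) := by
  rw [geom_sum₂_comm x y n, ← geom_sum₂_succ_eq]
  simpa only [Nat.add_sub_cancel] using geom_sum₂_comm x y (n + 1)

theorem PMaj.tensor_pvGeomSum {ι : Type*} [Fintype ι] [DecidableEq ι] {x : Fin d → ℝ}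
    {y : Fin e → ℝ} {c : ι → ℝ} {n : ℕ}
    (h : PMaj (pvTensor (pvPow x (n + 1)) c) (pvTensor (pvPow y (n + 1)) c)) :
    PMaj (pvTensor x (pvTensor (pvGeomSum x y (n + 1)) c))
      (pvTensor y (pvTensor (pvGeomSum x y (n + 1)) c)) := by
  let common := pvTensor (pvTensor x y) (pvTensor (pvGeomSum x y n) c)
  refine (h.sumElim common).of_permClass_eq ?_ ?_ <;>
    simp only [common, permClass_sumElim, permClass_pvTensor, permClass_pvPow,
      permClass_pvGeomSum, Nat.add_sub_cancel]
  · rw [geom_sum₂_succ_eq]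
    ring
  · rw [geom_sum₂_succ_eq']
    ring

end GeomSum

theorem exists_isProbVec_of_pMaj_pvTensor {ι κ μ : Type*} [Fintype ι] [DecidableEq ι] [Fintype κ]
    [DecidableEq κ] [Fintype μ] [DecidableEq μ] {x : ι → ℝ} {y : κ → ℝ} {c : μ → ℝ}
    (hc : 0 ≤ c) (hsum : 0 < ∑ i, c i) (h : PMaj (pvTensor x c) (pvTensor y c)) :
    ∃ (k : ℕ) (c' : Fin k → ℝ), IsProbVec c' ∧ PMaj (pvTensor x c') (pvTensor y c') := by
  let σ := (Fintype.equivFin μ).symm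
  have hinv : 0 ≤ (∑ i, c i)⁻¹ := (inv_pos.2 hsum).le
  refine ⟨Fintype.card μ, (∑ i, c i)⁻¹ • c ∘ σ, ⟨fun i => mul_nonneg hinv (hc _), ?_⟩, ?_⟩
  · simp only [Pi.smul_apply, Function.comp_apply, smul_eq_mul, ← Finset.mul_sum,
      Equiv.sum_comp σ c, inv_mul_cancel₀ hsum.ne']
  · have hscale := (h.smul hinv).comp_equiv ((Equiv.refl ι).prodCongr σ)
      ((Equiv.refl κ).prodCongr σ)
    convert hscale using 1 <;> ext p <;> simp [pvTensor, mul_left_comm]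

theorem multicopy_catalysis_iff_single_general {d e : ℕ} {x : Fin d → ℝ} {y : Fin e → ℝ}
    (hx : IsProbVec x) (hy : IsProbVec y) :
    (∃ m : ℕ, 1 ≤ m ∧ ∃ (k : ℕ) (c : Fin k → ℝ), IsProbVec c ∧
        PMaj (pvTensor (pvPow x m) c) (pvTensor (pvPow y m) c)) ↔
      (∃ (k' : ℕ) (c' : Fin k' → ℝ), IsProbVec c' ∧
        PMaj (pvTensor x c') (pvTensor y c')) := by
  constructor
  · rintro ⟨m, hm, k, c, hc, h⟩
    obtain ⟨n, rfl⟩ := Nat.exists_eq_add_of_le' hm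
    have hnonneg : 0 ≤ pvTensor (pvGeomSum x y (n + 1)) c :=
      pvTensor_nonneg (pvGeomSum_nonneg hx.1 hy.1 _) hc.1
    have hsum : 0 < ∑ p, pvTensor (pvGeomSum x y (n + 1)) c p := by
      simp only [sum_pvTensor, sum_pvGeomSum, hx.2, hy.2, hc.2, one_pow, mul_one,
        Finset.sum_const, Finset.card_range, nsmul_eq_mul]
      positivity
    exact exists_isProbVec_of_pMaj_pvTensor hnonneg hsum h.tensor_pvGeomSum
  · rintro ⟨k, c, hc, h⟩
    refine ⟨1, le_rfl, k, c, hc, h.of_permClass_eq ?_ ?_⟩ <;>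
      simp only [permClass_pvTensor, permClass_pvPow, pow_one]

/-- Duan–Feng–Li–Ying: multiple-copy catalytic transformation is equivalent to
single-copy catalytic transformation. -/
theorem multicopy_catalysis_iff_single {d : ℕ} (x y : Fin d → ℝ)
    (hx : IsProbVec x) (hy : IsProbVec y)
    (hxp : ∀ i, 0 < x i) (hyp : ∀ i, 0 < y i) :
    (∃ m : ℕ, 1 ≤ m ∧ ∃ (k : ℕ) (c : Fin k → ℝ), IsProbVec c ∧
        PMaj (pvTensor (pvPow x m) c) (pvTensor (pvPow y m) c)) ↔
      (∃ (k' : ℕ) (c' : Fin k' → ℝ), IsProbVec c' ∧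
        PMaj (pvTensor x c') (pvTensor y c')) :=
  multicopy_catalysis_iff_single_general hx hy
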